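/- Let H be cocommutative. Every unital algebra homomorphism a: H → Z(A)^H (into the H-invariant central elements) belongs to GL(H, A), its convolution inverse is a⁻¹(g) = a(S(g)), and these homomorphisms form a subgroup of GL(H, A). If a is moreover a *-homomorphism, then a ∈ U(H, A). -/

import Mathlib

open scoped TensorProduct

/-- A choice of a finite "Sweedler representation" of the comultiplication:
`Δ g = ∑ₚ p.1 ⊗ p.2` where `p` ranges over the list `rep g`. -/
structure SweedlerRep (C H : Type*) [CommSemiring C] [AddCommMonoid H] [Module C H]
    [CoalgebraStruct C H] where
  rep : H → List (H × H)
  rep_spec : ∀ g : H,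
    Coalgebra.comul (R := C) g = ((rep g).map fun p => p.1 ⊗ₜ[C] p.2).sum

section GLGroup

variable {C H A : Type*} [CommRing C] [StarRing C]
  [Ring H] [HopfAlgebra C H] [StarRing H] [StarModule C H]
  [Ring A] [Algebra C A] [StarRing A] [StarModule C A]

/-- The convolution product on `Hom(H, A)`: `(a * b)(g) = a(g₍₁₎) b(g₍₂₎)`. -/
def conv (Δ : SweedlerRep C H) (a b : H → A) : H → A :=
  fun g => ((Δ.rep g).map fun p => a p.1 * b p.2).sum

/-- The convolution unit `e(g) = ε(g)·1`. -/
def convUnit (C : Type*) {H : Type*} [CommRing C] [AddCommGroup H] [Module C H]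
    [CoalgebraStruct C H] (A : Type*) [Ring A] [Algebra C A] : H → A :=
  fun g => Coalgebra.counit (R := C) g • (1 : A)

/-- Membership in `GL(H, A)`: a `C`-linear map `a : H → A` with (i) normalization
`a(1) = 1`, (ii) action condition `a(gh) = a(g₍₁₎)(g₍₂₎ ▷ a(h))` and (iii) module
condition `(g₍₁₎ ▷ b) a(g₍₂₎) = a(g₍₁₎)(g₍₂₎ ▷ b)`. -/
def memGL (Δ : SweedlerRep C H) (act : H → A → A) (a : H → A) : Prop :=
  IsLinearMap C a ∧ a 1 = 1 ∧
  (∀ g h : H, a (g * h) = ((Δ.rep g).map fun p => a p.1 * act p.2 (a h)).sum) ∧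
  (∀ (g : H) (b : A),
    ((Δ.rep g).map fun p => act p.1 b * a p.2).sum
      = ((Δ.rep g).map fun p => a p.1 * act p.2 b).sum)

/-- The convolution inverse formula `a⁻¹(g) = g₍₂₎ ▷ a(S⁻¹(g₍₁₎))`. -/
def convInv (Δ : SweedlerRep C H) (act : H → A → A) (Sinv : H → H) (a : H → A) : H → A :=
  fun g => ((Δ.rep g).map fun p => act p.2 (a (Sinv p.1))).sum

end GLGroup


/-- Membership in `U(H, A)`: an element of `GL(H, A)` satisfying the unitarity condition
`a(g₍₁₎)(a(S(g₍₂₎)*))* = ε(g)·1`. -/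
def memU {C H A : Type*} [CommRing C] [StarRing C]
    [Ring H] [HopfAlgebra C H] [StarRing H] [StarModule C H]
    [Ring A] [Algebra C A] [StarRing A] [StarModule C A]
    (Δ : SweedlerRep C H) (act : H → A → A) (a : H → A) : Prop :=
  memGL Δ act a ∧
  ∀ g : H,
    ((Δ.rep g).map fun p =>
        a p.1 * star (a (star (HopfAlgebra.antipode (R := C) p.2)))).sum
      = Coalgebra.counit (R := C) g • (1 : A)

/-- A unital algebra homomorphism from `H` into the `H`-invariant central elements
`Z(A)^H` of `A`. -/
def IsInvCentralHom (C : Type*) {H A : Type*} [CommRing C] [StarRing C]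
    [Ring H] [HopfAlgebra C H] [StarRing H] [StarModule C H]
    [Ring A] [Algebra C A] [StarRing A] [StarModule C A]
    (act : H → A → A) (a : H → A) : Prop :=
  IsLinearMap C a ∧ a 1 = 1 ∧ (∀ g h : H, a (g * h) = a g * a h) ∧
  (∀ (g : H) (b : A), a g * b = b * a g) ∧
  (∀ g h : H, act h (a g) = Coalgebra.counit (R := C) h • a g)

/-!
For the convolution product, an algebra homomorphism `f` satisfies
`f * (f ∘ S) = f ∘ (id * S) = ε 1`, so `f ∘ S` is its inverse. When `f` takes values in `Z(A)^H`,
the action on these values is through the counit, which turns the action condition of `GL(H, A)`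
into multiplicativity, while cocommutativity makes `f` commute with every map with respect to
convolution, which is the module condition. Since `Z(A)^H` is a commutative algebra, the
convolution product of two homomorphisms into it is again a homomorphism, and so is `f ∘ S`
although `S` reverses products.
-/

open Coalgebra HopfAlgebra WithConv

namespace SweedlerRep

variable {C H M A : Type*} [CommSemiring C] [AddCommMonoid H] [Module C H]

section CoalgebraStruct

variable [CoalgebraStruct C H] (Δ : SweedlerRep C H)

theorem sum_map_tmul [AddCommMonoid M] [Module C M] (T : H ⊗[C] H →ₗ[C] M) (g : H) :
    ((Δ.rep g).map fun p => T (p.1 ⊗ₜ[C] p.2)).sum = T (comul g) := by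
  rw [Δ.rep_spec, map_list_sum, List.map_map]
  rfl

end CoalgebraStruct

variable [Coalgebra C H] (Δ : SweedlerRep C H)

theorem isCocomm
    (hcocom : ∀ g : H, comul (R := C) g = ((Δ.rep g).map fun p => p.2 ⊗ₜ[C] p.1).sum) :
    IsCocomm C H where
  comm_comp_comul := LinearMap.ext fun g =>
    (Δ.sum_map_tmul (TensorProduct.comm C H H).toLinearMap g).symm.trans (hcocom g).symm

theorem sum_map_mul_counit_smul [NonUnitalNonAssocSemiring A] [Module C A] [SMulCommClass C A A]
    [IsScalarTower C A A] (f : H →ₗ[C] A) (x : A) (g : H) :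
    ((Δ.rep g).map fun p => f p.1 * counit (R := C) p.2 • x).sum = f g * x := by
  simpa [mul_smul_comm] using Δ.sum_map_tmul
    (LinearMap.mulRight C x ∘ₗ f ∘ₗ (TensorProduct.rid C H).toLinearMap ∘ₗ counit.lTensor H) g

end SweedlerRep

section Convolution

variable {C H A : Type*} [CommSemiring C]

theorem commute_toConv_of_commute [AddCommMonoid H] [Module C H] [Coalgebra C H] [IsCocomm C H]
    [NonUnitalNonAssocSemiring A] [Module C A] [SMulCommClass C A A] [IsScalarTower C A A]
    {f f' : H →ₗ[C] A} (hcomm : ∀ g h, Commute (f g) (f' h)) :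
    Commute (toConv f) (toConv f') := by
  have hmap : LinearMap.mul' C A ∘ₗ TensorProduct.map f f' =
      LinearMap.mul' C A ∘ₗ TensorProduct.map f' f ∘ₗ (TensorProduct.comm C H H).toLinearMap :=
    TensorProduct.ext' fun g h => hcomm g h
  ext g
  simpa using LinearMap.congr_fun hmap (comul g)

variable [Semiring H] [HopfAlgebra C H]

theorem toConv_mul_toConv_comp_antipode [Semiring A] [Algebra C A] (f : H →ₐ[C] A) :
    toConv f.toLinearMap * toConv (f.toLinearMap ∘ₗ antipode C) = 1 := by
  have h := LinearMap.algHom_comp_convMul_distrib f (toConv .id) (toConv (antipode C (A := H)))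
  ext g
  simpa using (LinearMap.congr_fun h g).symm

theorem toConv_comp_antipode_mul_toConv [Semiring A] [Algebra C A] (f : H →ₐ[C] A) :
    toConv (f.toLinearMap ∘ₗ antipode C) * toConv f.toLinearMap = 1 := by
  have h := LinearMap.algHom_comp_convMul_distrib f (toConv (antipode C (A := H))) (toConv .id)
  ext g
  simpa using (LinearMap.congr_fun h g).symm

end Convolution

section Invariants

variable {C H A : Type*} [CommSemiring C] [AddCommMonoid H] [Module C H] [Coalgebra C H]
  [Semiring A] [Algebra C A] (Δ : SweedlerRep C H) {act : H → A → A}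
  (hact_linA : ∀ g : H, IsLinearMap C (act g))
  (hact_alg : ∀ (g : H) (x y : A), act g (x * y) =
    ((Δ.rep g).map fun p => act p.1 x * act p.2 y).sum)
  (hact_unit : ∀ g : H, act g (1 : A) = counit (R := C) g • (1 : A))

/-- The subalgebra `A^H` of elements on which `H` acts through its counit. -/
def invariants : Subalgebra C A where
  carrier := {x | ∀ h : H, act h x = counit (R := C) h • x}
  mul_mem' {x y} hx hy h := by
    simpa [hact_alg, hx _, hy _] using
      Δ.sum_map_mul_counit_smul (LinearMap.toSpanSingleton C A x ∘ₗ counit) y h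
  add_mem' hx hy h := by rw [(hact_linA h).map_add, hx, hy, smul_add]
  algebraMap_mem' c h := by
    rw [Algebra.algebraMap_eq_smul_one, (hact_linA h).map_smul, hact_unit, smul_comm]

/-- The commutative algebra `Z(A)^H` of `H`-invariant central elements. -/
def invariantCenter : Subalgebra C A :=
  Subalgebra.center C A ⊓ invariants Δ hact_linA hact_alg hact_unit

instance : CommSemiring (invariantCenter Δ hact_linA hact_alg hact_unit) where
  mul_comm x y := Subtype.ext (Subalgebra.mem_center_iff.mp y.2.1 x)

end Invariants

section Conv

variable {C H A : Type*} [CommRing C] [Ring A] [Algebra C A]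

theorem conv_eq_convMul [Ring H] [HopfAlgebra C H] (Δ : SweedlerRep C H) (f f' : H →ₗ[C] A) :
    conv Δ f f' = ⇑(toConv f * toConv f') :=
  funext fun g => Δ.sum_map_tmul (LinearMap.mul' C A ∘ₗ TensorProduct.map f f') g

theorem convUnit_eq_convOne [AddCommGroup H] [Module C H] [Coalgebra C H] :
    convUnit C A = ⇑(1 : WithConv (H →ₗ[C] A)) :=
  funext fun g => (Algebra.algebraMap_eq_smul_one (counit g)).symm

end Conv

namespace IsInvCentralHom

variable {C H A : Type*} [CommRing C] [StarRing C]
  [Ring H] [HopfAlgebra C H] [StarRing H] [StarModule C H]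
  [Ring A] [Algebra C A] [StarRing A] [StarModule C A]
  {act : H → A → A} {a b : H → A}

/-- The algebra homomorphism `H →ₐ[C] A` underlying a homomorphism into `Z(A)^H`. -/
def toAlgHom (ha : IsInvCentralHom C act a) : H →ₐ[C] A :=
  AlgHom.ofLinearMap (ha.1.mk' a) ha.2.1 ha.2.2.1

theorem memGL (ha : IsInvCentralHom C act a) (Δ : SweedlerRep C H) [IsCocomm C H]
    (hact_lin : ∀ x : A, IsLinearMap C fun g => act g x) : memGL Δ act a := by
  obtain ⟨hlin, hone, hmul, hcentral, hinv⟩ := ha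
  refine ⟨hlin, hone, fun g h => ?action, fun g x => ?module⟩
  case action =>
    simp only [hinv]
    exact (hmul g h).trans (Δ.sum_map_mul_counit_smul (hlin.mk' a) (a h) g).symm
  case module =>
    let actOn : H →ₗ[C] A := (hact_lin x).mk' _
    have hcomm : Commute (toConv actOn) (toConv (hlin.mk' a)) :=
      commute_toConv_of_commute fun g h => (hcentral h (act g x)).symm
    exact congrFun (calc
      conv Δ (fun h => act h x) a
        = ⇑(toConv actOn * toConv (hlin.mk' a)) := conv_eq_convMul Δ actOn (hlin.mk' a)
      _ = ⇑(toConv (hlin.mk' a) * toConv actOn) := by rw [hcomm.eq]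
      _ = conv Δ a fun h => act h x := (conv_eq_convMul Δ (hlin.mk' a) actOn).symm) g

theorem conv_antipode (ha : IsInvCentralHom C act a) (Δ : SweedlerRep C H) :
    conv Δ a (fun g => a (antipode C g)) = convUnit C A := by
  rw [convUnit_eq_convOne, ← toConv_mul_toConv_comp_antipode ha.toAlgHom]
  exact conv_eq_convMul Δ ha.toAlgHom.toLinearMap (ha.toAlgHom.toLinearMap ∘ₗ antipode C)

theorem antipode_conv (ha : IsInvCentralHom C act a) (Δ : SweedlerRep C H) :
    conv Δ (fun g => a (antipode C g)) a = convUnit C A := by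
  rw [convUnit_eq_convOne, ← toConv_comp_antipode_mul_toConv ha.toAlgHom]
  exact conv_eq_convMul Δ (ha.toAlgHom.toLinearMap ∘ₗ antipode C) ha.toAlgHom.toLinearMap

theorem memU (ha : IsInvCentralHom C act a) (Δ : SweedlerRep C H) [IsCocomm C H]
    (hact_lin : ∀ x : A, IsLinearMap C fun g => act g x)
    (hstar : ∀ g : H, a (star g) = star (a g)) : memU Δ act a := by
  refine ⟨ha.memGL Δ hact_lin, fun g => ?_⟩
  simp only [hstar, star_star]
  exact congrFun (ha.conv_antipode Δ) g

theorem comp_antipode (ha : IsInvCentralHom C act a) :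
    IsInvCentralHom C act (fun g => a (antipode C g)) := by
  obtain ⟨hlin, hone, hmul, hcentral, hinv⟩ := ha
  refine ⟨(hlin.mk' a ∘ₗ antipode C).isLinear, ?_, fun g h => ?_,
    fun g => hcentral _, fun g => hinv _⟩
  · simp only [antipode_one, hone]
  · exact (congrArg a (antipode_mul_antidistrib g h)).trans ((hmul _ _).trans (hcentral _ _))

theorem iff_exists_algHom (Δ : SweedlerRep C H)
    (hact_linA : ∀ g : H, IsLinearMap C (act g))
    (hact_alg : ∀ (g : H) (x y : A), act g (x * y) =
      ((Δ.rep g).map fun p => act p.1 x * act p.2 y).sum)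
    (hact_unit : ∀ g : H, act g (1 : A) = counit (R := C) g • (1 : A)) :
    IsInvCentralHom C act a ↔
      ∃ f : H →ₐ[C] invariantCenter Δ hact_linA hact_alg hact_unit, (fun g => (f g : A)) = a := by
  constructor
  · intro ha
    have hmem (g : H) : ha.toAlgHom g ∈ invariantCenter Δ hact_linA hact_alg hact_unit :=
      ⟨Subalgebra.mem_center_iff.mpr fun x => (ha.2.2.2.1 g x).symm, ha.2.2.2.2 g⟩
    exact ⟨ha.toAlgHom.codRestrict _ hmem, rfl⟩
  · rintro ⟨f, rfl⟩
    exact ⟨((Subalgebra.val _).comp f).toLinearMap.isLinear, by simp, by simp,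
      fun g x => (Subalgebra.mem_center_iff.mp (f g).2.1 x).symm, fun g => (f g).2.2⟩

protected theorem conv (ha : IsInvCentralHom C act a) (hb : IsInvCentralHom C act b)
    (Δ : SweedlerRep C H) (hact_linA : ∀ g : H, IsLinearMap C (act g))
    (hact_alg : ∀ (g : H) (x y : A), act g (x * y) =
      ((Δ.rep g).map fun p => act p.1 x * act p.2 y).sum) :
    IsInvCentralHom C act (conv Δ a b) := by
  have hact_unit (h : H) : act h (1 : A) = counit (R := C) h • (1 : A) := by
    simpa only [ha.2.1] using ha.2.2.2.2 1 h
  rw [iff_exists_algHom Δ hact_linA hact_alg hact_unit] at ha hb ⊢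
  obtain ⟨f, rfl⟩ := ha
  obtain ⟨f', rfl⟩ := hb
  let incl := (invariantCenter Δ hact_linA hact_alg hact_unit).val
  refine ⟨ofConv (toConv f * toConv f'), ?_⟩
  calc (fun g => incl ((toConv f * toConv f') g))
      = ⇑(toConv (incl.comp f).toLinearMap * toConv (incl.comp f').toLinearMap) :=
        congrArg DFunLike.coe (LinearMap.algHom_comp_convMul_distrib incl
          (toConv f.toLinearMap) (toConv f'.toLinearMap))
    _ = _root_.conv Δ (fun g => incl (f g)) (fun g => incl (f' g)) :=
        (conv_eq_convMul Δ (incl.comp f).toLinearMap (incl.comp f').toLinearMap).symm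

end IsInvCentralHom

theorem isInvCentralHom_convUnit {C H A : Type*} [CommRing C] [StarRing C]
    [Ring H] [HopfAlgebra C H] [StarRing H] [StarModule C H]
    [Ring A] [Algebra C A] [StarRing A] [StarModule C A] {act : H → A → A}
    (hact_linA : ∀ g : H, IsLinearMap C (act g))
    (hact_unit : ∀ g : H, act g (1 : A) = counit (R := C) g • (1 : A)) :
    IsInvCentralHom C act (convUnit C A : H → A) := by
  let e : H →ₐ[C] A := (Algebra.ofId C A).comp (Bialgebra.counitAlgHom C H)
  have he : convUnit C A = ⇑e := convUnit_eq_convOne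
  refine he ▸ ⟨e.toLinearMap.isLinear, map_one e, map_mul e, fun g => Algebra.commutes _,
    fun g h => ?_⟩
  calc act h (e g) = act h (counit (R := C) g • 1) := congrArg (act h) (congrFun he g).symm
    _ = counit (R := C) h • counit (R := C) g • 1 := by
        rw [(hact_linA h).map_smul, hact_unit, smul_comm]
    _ = counit (R := C) h • e g := congrArg _ (congrFun he g)

/-- Let `H` be cocommutative. Every unital algebra homomorphism
`a : H → Z(A)^H` belongs to `GL(H, A)`, its convolution inverse is `a⁻¹(g) = a(S(g))`,
and these homomorphisms form a subgroup of `GL(H, A)`.  If `a` is moreover a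
`*`-homomorphism, then `a ∈ U(H, A)`. -/
theorem invCentralHom_memGL
    {C H A : Type*} [CommRing C] [StarRing C]
    [Ring H] [HopfAlgebra C H] [StarRing H] [StarModule C H]
    [Ring A] [Algebra C A] [StarRing A] [StarModule C A]
    (Δ : SweedlerRep C H)
    -- `H` is cocommutative: `Δ = Δ^op`
    (hcocom : ∀ g : H, Coalgebra.comul (R := C) g
      = ((Δ.rep g).map fun p => p.2 ⊗ₜ[C] p.1).sum)
    -- `act` is a `*`-action of `H` on the unital `*`-algebra `A`
    (act : H → A → A)
    (hact_one : ∀ a, act 1 a = a)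
    (hact_mulH : ∀ g h a, act (g * h) a = act g (act h a))
    (hact_lin : ∀ a : A, IsLinearMap C fun g => act g a)
    (hact_linA : ∀ g : H, IsLinearMap C (act g))
    (hact_alg : ∀ (g : H) (a b : A), act g (a * b) =
      ((Δ.rep g).map fun p => act p.1 a * act p.2 b).sum)
    (hact_star : ∀ g a, star (act g a) =
      act (star (HopfAlgebra.antipode (R := C) g)) (star a))
    (hact_unit : ∀ g : H, act g (1 : A) = Coalgebra.counit (R := C) g • (1 : A)) :
    -- every unital algebra homomorphism into `Z(A)^H` belongs to `GL(H, A)` ...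
    (∀ a : H → A, IsInvCentralHom C act a → memGL Δ act a) ∧
    -- ... with convolution inverse `a⁻¹(g) = a(S(g))` ...
    (∀ a : H → A, IsInvCentralHom C act a →
      conv Δ a (fun g => a (HopfAlgebra.antipode (R := C) g)) = convUnit C A ∧
      conv Δ (fun g => a (HopfAlgebra.antipode (R := C) g)) a = convUnit C A) ∧
    -- ... and these homomorphisms form a subgroup of `GL(H, A)`:
    IsInvCentralHom C act (convUnit C A) ∧
    (∀ a b : H → A, IsInvCentralHom C act a → IsInvCentralHom C act b →
      IsInvCentralHom C act (conv Δ a b)) ∧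
    (∀ a : H → A, IsInvCentralHom C act a →
      IsInvCentralHom C act (fun g => a (HopfAlgebra.antipode (R := C) g))) ∧
    -- if `a` is moreover a `*`-homomorphism then `a ∈ U(H, A)`
    (∀ a : H → A, IsInvCentralHom C act a → (∀ g : H, a (star g) = star (a g)) →
      memU Δ act a) := by
  have : Coalgebra.IsCocomm C H := Δ.isCocomm hcocom
  exact ⟨fun a ha => ha.memGL Δ hact_lin,
    fun a ha => ⟨ha.conv_antipode Δ, ha.antipode_conv Δ⟩,
    isInvCentralHom_convUnit hact_linA hact_unit,
    fun a b ha hb => ha.conv hb Δ hact_linA hact_alg,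
    fun a ha => ha.comp_antipode,
    fun a ha hstar => ha.memU Δ hact_lin hstar⟩
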